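/- In every parity bidding game, threshold budgets exist and are unique: there is exactly one function Thresh : V → [0,1] such that for every vertex v, Player 1 has a winning strategy from v whenever his initial budget exceeds Thresh(v), and Player 2 has a winning strategy from v whenever his initial budget exceeds 1 − Thresh(v). -/

import Mathlib

open scoped Classical

/-! ### Bidding games: the basic model -/

/-- One round of a bidding game: the vertex the token was moved to, the winning bid,
and whether Player 1 won the bidding. -/
structure BidRound (V : Type) where
  dest : V
  bid : ℝ
  p1Won : Bool

/-- A history: the initial vertex together with the list of rounds played so far. -/
structure Hist (V : Type) where
  init : V
  rounds : List (BidRound V)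

/-- The vertex currently occupied by the token. -/
def Hist.cur {V : Type} (h : Hist V) : V :=
  h.rounds.getLast?.elim h.init BidRound.dest

/-- The net payment of Player 1 so far (bids paid upon winning minus bids received). -/
def Hist.pay1 {V : Type} (h : Hist V) : ℝ :=
  (h.rounds.map (fun r => if r.p1Won then r.bid else -r.bid)).sum

/-- The net payment of Player 2 so far. -/
def Hist.pay2 {V : Type} (h : Hist V) : ℝ := -h.pay1

/-- The sum of the weights of all vertices visited so far (including the current one). -/
def Hist.energyAll {V : Type} (w : V → ℤ) (h : Hist V) : ℤ :=
  w h.init + (h.rounds.map (fun r => w r.dest)).sum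

/-- A strategy: maps a history to a bid and the vertex to move to upon winning. -/
def Strat (V : Type) := Hist V → ℝ × V

/-- A tie-breaking mechanism: decides at each history whether Player 1 wins a tie. -/
def TieBreak (V : Type) := Hist V → Bool

/-- A bidding game: a finite directed graph in which every vertex has an outgoing edge. -/
structure BiddingGame (V : Type) [Fintype V] where
  E : V → V → Prop
  total : ∀ v, ∃ u, E v u

/-- One round of play: both players bid; the higher bidder (Player 1 upon a tie won by
the tie-breaking mechanism) pays his bid to the other player and moves the token. -/
noncomputable def extend {V : Type} (tb : TieBreak V) (f1 f2 : Strat V) (h : Hist V) : Hist V :=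
  if (f2 h).1 < (f1 h).1 ∨ ((f1 h).1 = (f2 h).1 ∧ tb h = true) then
    ⟨h.init, h.rounds ++ [⟨(f1 h).2, (f1 h).1, true⟩]⟩
  else
    ⟨h.init, h.rounds ++ [⟨(f2 h).2, (f2 h).1, false⟩]⟩

/-- The history after `n` rounds, starting at `v0`. -/
noncomputable def play {V : Type} (tb : TieBreak V) (f1 f2 : Strat V) (v0 : V) : ℕ → Hist V
  | 0 => ⟨v0, []⟩
  | n + 1 => extend tb f1 f2 (play tb f1 f2 v0 n)

/-- The vertex occupied after `n` rounds. -/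
noncomputable def visit {V : Type} (tb : TieBreak V) (f1 f2 : Strat V) (v0 : V) (n : ℕ) : V :=
  (play tb f1 f2 v0 n).cur

/-- The energy (sum of weights) of the prefix of length `n` of the outcome. -/
noncomputable def energy {V : Type} (w : V → ℤ) (tb : TieBreak V) (f1 f2 : Strat V) (v0 : V)
    (n : ℕ) : ℤ :=
  ∑ i ∈ Finset.range n, w (visit tb f1 f2 v0 i)

/-- Player 1's strategy is legal w.r.t. the initial budget `B`: along any play, his bids
are nonnegative, never exceed his current budget, and his moves follow edges. -/
def Legal1 {V : Type} [Fintype V] (G : BiddingGame V) (f1 : Strat V) (B : ℝ) : Prop :=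
  ∀ (tb : TieBreak V) (f2 : Strat V) (v0 : V) (n : ℕ),
    0 ≤ (f1 (play tb f1 f2 v0 n)).1 ∧
    (f1 (play tb f1 f2 v0 n)).1 ≤ B - (play tb f1 f2 v0 n).pay1 ∧
    G.E (play tb f1 f2 v0 n).cur (f1 (play tb f1 f2 v0 n)).2

/-- Player 2's strategy is legal w.r.t. the initial budget `B`. -/
def Legal2 {V : Type} [Fintype V] (G : BiddingGame V) (f2 : Strat V) (B : ℝ) : Prop :=
  ∀ (tb : TieBreak V) (f1 : Strat V) (v0 : V) (n : ℕ),
    0 ≤ (f2 (play tb f1 f2 v0 n)).1 ∧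
    (f2 (play tb f1 f2 v0 n)).1 ≤ B - (play tb f1 f2 v0 n).pay2 ∧
    G.E (play tb f1 f2 v0 n).cur (f2 (play tb f1 f2 v0 n)).2

/-- A memoryless strategy: its action depends only on the current vertex and the
player's current budget (equivalently, the net payments so far). -/
def Memoryless {V : Type} (f : Strat V) : Prop :=
  ∀ h h' : Hist V, h.cur = h'.cur → h.pay1 = h'.pay1 → f h = f h'

/-- A memoryless strategy in a mean-payoff game: its action depends only on the current
vertex, the player's current budget, and the current energy level. -/
def MemorylessE {V : Type} (w : V → ℤ) (f : Strat V) : Prop :=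
  ∀ h h' : Hist V, h.cur = h'.cur → h.pay1 = h'.pay1 →
    h.energyAll w = h'.energyAll w → f h = f h'

/-- A constant-memory strategy for Player 2 (Max): the action depends only on the current
vertex, Player 2's current budget, the current energy level, and a memory state ranging
over a finite set (of size independent of the history), updated round by round. -/
def FiniteMemory2 {V : Type} (w : V → ℤ) (f : Strat V) (B : ℝ) : Prop :=
  ∃ (M : Type) (_ : Fintype M) (m0 : M) (upd : M → BidRound V → M)
    (act : V → ℝ → ℤ → M → ℝ × V),
    ∀ h : Hist V, f h = act h.cur (B - h.pay2) (h.energyAll w) (h.rounds.foldl upd m0)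

/-- Strong connectivity of the arena. -/
def StronglyConnected {V : Type} [Fintype V] (G : BiddingGame V) : Prop :=
  ∀ v u : V, Relation.ReflTransGen G.E v u

/-! ### Richman games -/

/-- The successors of `v`. -/
noncomputable def BiddingGame.adj {V : Type} [Fintype V] (G : BiddingGame V) (v : V) :
    Finset V :=
  Finset.univ.filter (fun u => G.E v u)

lemma BiddingGame.adj_nonempty {V : Type} [Fintype V] (G : BiddingGame V) (v : V) :
    (G.adj v).Nonempty := by
  obtain ⟨u, hu⟩ := G.total v
  exact ⟨u, by simpa [BiddingGame.adj] using hu⟩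

/-- The Richman function `R(v, i)`. -/
noncomputable def Rfun {V : Type} [Fintype V] (G : BiddingGame V) (vR vS : V) :
    ℕ → V → ℝ
  | 0, v => if v = vR then 0 else 1
  | i + 1, v =>
      if v = vR then 0
      else if v = vS then 1
      else ((G.adj v).sup' (G.adj_nonempty v) (Rfun G vR vS i) +
            (G.adj v).inf' (G.adj_nonempty v) (Rfun G vR vS i)) / 2

/-- The limit Richman function `R(v) = lim_i R(v, i)`; since `i ↦ R(v, i)` is
nonincreasing, the limit equals the infimum. -/
noncomputable def Rlim {V : Type} [Fintype V] (G : BiddingGame V) (vR vS : V)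
    (v : V) : ℝ :=
  ⨅ i : ℕ, Rfun G vR vS i v

/-- Player 1 wins an outcome of a Richman game: `vR` is reached, and `vS` is not
reached before that (the game ends once a target is reached). -/
def Win1Richman {V : Type} (tb : TieBreak V) (f1 f2 : Strat V) (v0 vR vS : V) : Prop :=
  ∃ n, visit tb f1 f2 v0 n = vR ∧ ∀ m < n, visit tb f1 f2 v0 m ≠ vS

/-- Player 2 wins an outcome of a Richman game: `vS` is reached first, or no target is
ever reached. -/
def Win2Richman {V : Type} (tb : TieBreak V) (f1 f2 : Strat V) (v0 vR vS : V) : Prop :=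
  (∃ n, visit tb f1 f2 v0 n = vS ∧ ∀ m < n, visit tb f1 f2 v0 m ≠ vR) ∨
  (∀ n, visit tb f1 f2 v0 n ≠ vR ∧ visit tb f1 f2 v0 n ≠ vS)

/-- Player 1 has a winning strategy in the Richman game from `v0` with budget `B`. -/
def Win1RichmanFrom {V : Type} [Fintype V] (G : BiddingGame V) (vR vS v0 : V)
    (B : ℝ) : Prop :=
  ∀ tb : TieBreak V, ∃ f1 : Strat V, Legal1 G f1 B ∧
    ∀ f2 : Strat V, Legal2 G f2 (1 - B) → Win1Richman tb f1 f2 v0 vR vS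

/-- Player 2 has a winning strategy in the Richman game from `v0` with budget `B`. -/
def Win2RichmanFrom {V : Type} [Fintype V] (G : BiddingGame V) (vR vS v0 : V)
    (B : ℝ) : Prop :=
  ∀ tb : TieBreak V, ∃ f2 : Strat V, Legal2 G f2 B ∧
    ∀ f1 : Strat V, Legal1 G f1 (1 - B) → Win2Richman tb f1 f2 v0 vR vS

/-- `t` is a threshold budget at `v` in the Richman game. -/
def IsThreshRichman {V : Type} [Fintype V] (G : BiddingGame V) (vR vS v : V)
    (t : ℝ) : Prop :=
  (∀ B : ℝ, B ≤ 1 → t < B → Win1RichmanFrom G vR vS v B) ∧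
  (∀ B : ℝ, B ≤ 1 → 1 - t < B → Win2RichmanFrom G vR vS v B)

/-! ### Richman games with target sets -/

def Win1RichmanSet {V : Type} (tb : TieBreak V) (f1 f2 : Strat V) (v0 : V)
    (R S : Set V) : Prop :=
  ∃ n, visit tb f1 f2 v0 n ∈ R ∧ ∀ m < n, visit tb f1 f2 v0 m ∉ S

def Win2RichmanSet {V : Type} (tb : TieBreak V) (f1 f2 : Strat V) (v0 : V)
    (R S : Set V) : Prop :=
  (∃ n, visit tb f1 f2 v0 n ∈ S ∧ ∀ m < n, visit tb f1 f2 v0 m ∉ R) ∨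
  (∀ n, visit tb f1 f2 v0 n ∉ R ∧ visit tb f1 f2 v0 n ∉ S)

/-- `t` is a threshold budget at `v` in the Richman game with target sets `R` and `S`. -/
def IsThreshRichmanSet {V : Type} [Fintype V] (G : BiddingGame V) (R S : Set V)
    (v : V) (t : ℝ) : Prop :=
  (∀ B : ℝ, B ≤ 1 → t < B → ∀ tb : TieBreak V, ∃ f1 : Strat V, Legal1 G f1 B ∧
      ∀ f2 : Strat V, Legal2 G f2 (1 - B) → Win1RichmanSet tb f1 f2 v R S) ∧
  (∀ B : ℝ, B ≤ 1 → 1 - t < B → ∀ tb : TieBreak V, ∃ f2 : Strat V, Legal2 G f2 B ∧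
      ∀ f1 : Strat V, Legal1 G f1 (1 - B) → Win2RichmanSet tb f1 f2 v R S)

/-! ### Reachability games -/

/-- `t` is a threshold budget at `v` in the reachability game with target set `T`. -/
def IsThreshReach {V : Type} [Fintype V] (G : BiddingGame V) (T : Set V) (v : V)
    (t : ℝ) : Prop :=
  (∀ B : ℝ, B ≤ 1 → t < B → ∀ tb : TieBreak V, ∃ f1 : Strat V, Legal1 G f1 B ∧
      ∀ f2 : Strat V, Legal2 G f2 (1 - B) → ∃ n, visit tb f1 f2 v n ∈ T) ∧
  (∀ B : ℝ, B ≤ 1 → 1 - t < B → ∀ tb : TieBreak V, ∃ f2 : Strat V, Legal2 G f2 B ∧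
      ∀ f1 : Strat V, Legal1 G f1 (1 - B) → ∀ n, visit tb f1 f2 v n ∉ T)

/-! ### Parity games -/

/-- Player 1 wins an outcome of a parity game: the maximal parity index visited
infinitely often is odd. -/
def Win1Parity {V : Type} (p : V → ℕ) (tb : TieBreak V) (f1 f2 : Strat V)
    (v0 : V) : Prop :=
  Odd (sSup {k : ℕ | ∀ N : ℕ, ∃ n ≥ N, p (visit tb f1 f2 v0 n) = k})

def Win1ParityFrom {V : Type} [Fintype V] (G : BiddingGame V) (p : V → ℕ) (v0 : V)
    (B : ℝ) : Prop :=
  ∀ tb : TieBreak V, ∃ f1 : Strat V, Legal1 G f1 B ∧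
    ∀ f2 : Strat V, Legal2 G f2 (1 - B) → Win1Parity p tb f1 f2 v0

def Win2ParityFrom {V : Type} [Fintype V] (G : BiddingGame V) (p : V → ℕ) (v0 : V)
    (B : ℝ) : Prop :=
  ∀ tb : TieBreak V, ∃ f2 : Strat V, Legal2 G f2 B ∧
    ∀ f1 : Strat V, Legal1 G f1 (1 - B) → ¬ Win1Parity p tb f1 f2 v0

/-- `t` is a threshold budget at `v` in the parity game. -/
def IsThreshParity {V : Type} [Fintype V] (G : BiddingGame V) (p : V → ℕ) (v : V)
    (t : ℝ) : Prop :=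
  (∀ B : ℝ, B ≤ 1 → t < B → Win1ParityFrom G p v B) ∧
  (∀ B : ℝ, B ≤ 1 → 1 - t < B → Win2ParityFrom G p v B)

/-! ### Mean-payoff games (Min is Player 1, Max is Player 2) -/

/-- The mean-payoff value of the outcome. -/
noncomputable def mpval {V : Type} (w : V → ℤ) (tb : TieBreak V) (f1 f2 : Strat V)
    (v0 : V) : ℝ :=
  Filter.liminf (fun n : ℕ => (energy w tb f1 f2 v0 n : ℝ) / n) Filter.atTop

/-- Min can guarantee a nonpositive mean-payoff value from `v0` with budget `B`. -/
def MinWinsFrom {V : Type} [Fintype V] (G : BiddingGame V) (w : V → ℤ) (v0 : V)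
    (B : ℝ) : Prop :=
  ∀ tb : TieBreak V, ∃ f1 : Strat V, Legal1 G f1 B ∧
    ∀ f2 : Strat V, Legal2 G f2 (1 - B) → mpval w tb f1 f2 v0 ≤ 0

/-- Max can guarantee a strictly positive mean-payoff value from `v0` with budget `B`. -/
def MaxWinsFrom {V : Type} [Fintype V] (G : BiddingGame V) (w : V → ℤ) (v0 : V)
    (B : ℝ) : Prop :=
  ∀ tb : TieBreak V, ∃ f2 : Strat V, Legal2 G f2 B ∧
    ∀ f1 : Strat V, Legal1 G f1 (1 - B) → 0 < mpval w tb f1 f2 v0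

/-- `t` is a threshold budget at `v` in the mean-payoff game. -/
def IsThreshMP {V : Type} [Fintype V] (G : BiddingGame V) (w : V → ℤ) (v : V)
    (t : ℝ) : Prop :=
  (∀ B : ℝ, B ≤ 1 → t < B → MinWinsFrom G w v B) ∧
  (∀ B : ℝ, B ≤ 1 → 1 - t < B → MaxWinsFrom G w v B)

/-! ### The split graph `G^u` and the weighted Richman function -/

/-- Edges of `G^u`: `u` is split into `u_s = Sum.inl u` (keeping the outgoing edges of
`u`, with no incoming edges) and `u_t = Sum.inr ()` (receiving the edges into `u`, with
no outgoing edges). -/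
def splitE {V : Type} [Fintype V] (G : BiddingGame V) (u : V) :
    V ⊕ Unit → V ⊕ Unit → Prop
  | Sum.inl v, Sum.inl x => G.E v x ∧ x ≠ u
  | Sum.inl v, Sum.inr _ => G.E v u
  | Sum.inr _, _ => False

/-- The successors in `G^u` of a vertex `v ∈ V` (i.e. of `Sum.inl v`). -/
noncomputable def succu {V : Type} [Fintype V] (G : BiddingGame V) (u v : V) :
    Finset (V ⊕ Unit) :=
  Finset.univ.filter (fun y => splitE G u (Sum.inl v) y)

lemma succu_nonempty {V : Type} [Fintype V] (G : BiddingGame V) (u v : V) :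
    (succu G u v).Nonempty := by
  obtain ⟨x, hx⟩ := G.total v
  by_cases hxu : x = u
  · refine ⟨Sum.inr (), ?_⟩
    simp only [succu, Finset.mem_filter, Finset.mem_univ, true_and]
    exact show G.E v u from hxu ▸ hx
  · refine ⟨Sum.inl x, ?_⟩
    simp only [succu, Finset.mem_filter, Finset.mem_univ, true_and]
    exact show G.E v x ∧ x ≠ u from ⟨hx, hxu⟩

/-- `W(v⁺)`: the maximal value of `W` over the `G^u`-successors of `v`. -/
noncomputable def supWu {V : Type} [Fintype V] (G : BiddingGame V) (u : V)
    (W : V ⊕ Unit → ℝ) (v : V) : ℝ :=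
  (succu G u v).sup' (succu_nonempty G u v) W

/-- `W(v⁻)`: the minimal value of `W` over the `G^u`-successors of `v`. -/
noncomputable def infWu {V : Type} [Fintype V] (G : BiddingGame V) (u : V)
    (W : V ⊕ Unit → ℝ) (v : V) : ℝ :=
  (succu G u v).inf' (succu_nonempty G u v) W

/-- `W` is a weighted Richman function for the weights `w`, split at `u`:
`W(u_t) = 0` and `W(v) = (W(v⁺) + W(v⁻))/2 + w(v)` for every `v ∈ V`
(`Sum.inl v` represents `v`, in particular `Sum.inl u` is `u_s`). -/
def IsWRichman {V : Type} [Fintype V] (G : BiddingGame V) (w : V → ℝ) (u : V)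
    (W : V ⊕ Unit → ℝ) : Prop :=
  W (Sum.inr ()) = 0 ∧
  ∀ v : V, W (Sum.inl v) = (supWu G u W v + infWu G u W v) / 2 + w v

/-- Projection of `G^u`-vertices back to vertices of `G`. -/
def projU {V : Type} (u : V) : V ⊕ Unit → V := Sum.elim id (fun _ => u)

/-- `w_M`: the maximal absolute value of `W` over `V`. -/
noncomputable def wMax {V : Type} [Fintype V] (W : V ⊕ Unit → ℝ) (u : V) : ℝ :=
  Finset.univ.sup' ⟨u, Finset.mem_univ u⟩ (fun v : V => |W (Sum.inl v)|)

/-- `b_M`: the maximal value of the bid `(W(v⁺) − W(v⁻))/2` over `V`. -/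
noncomputable def bMax {V : Type} [Fintype V] (G : BiddingGame V) (u : V)
    (W : V ⊕ Unit → ℝ) : ℝ :=
  Finset.univ.sup' ⟨u, Finset.mem_univ u⟩
    (fun v : V => (supWu G u W v - infWu G u W v) / 2)

/-!
The threshold is the Richman function `R` (at every vertex, the mean of its largest and its
smallest value over the successors) that equals `0` on the bottom strongly connected components
whose largest index is odd, and `1` on the other bottom components.

A player whose budget `β` exceeds `R v` bids `R v - R u + k (β - R v)`, where `u` is a successor
minimizing `R` and `0 ≤ k < 1`. The surplus `β - R` is then multiplied by `1 - k` if he wins and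
moves to `u`, and by at least `1 + k` if he loses, so it stays positive. Outside a target `T` that
is reachable along minimizing edges, `k` can be chosen as a function of the distance to `T` in
such a way that a weighted surplus grows geometrically. Since budgets are bounded, `T` must be
visited again and again. With `T` the vertices of maximal index in the bottom components won by
the player, this forces the parity condition; the other player has the Richman function `1 - R`.
-/

/-! ### Reachability in directed graphs -/

section Reachability

open Relation

variable {α : Type*} {r : α → α → Prop}

/-- A vertex of a bottom strongly connected component: every vertex reachable from `x` can reach
`x` back. -/
def IsBottom (r : α → α → Prop) (x : α) : Prop :=
  ∀ y, ReflTransGen r x y → ReflTransGen r y x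

lemma IsBottom.of_reach {x y : α} (hx : IsBottom r x) (hxy : ReflTransGen r x y) :
    IsBottom r y :=
  fun _ hz ↦ (hx _ (hxy.trans hz)).trans hxy

lemma exists_reach_isBottom [Finite α] (r : α → α → Prop) (v : α) :
    ∃ x, ReflTransGen r v x ∧ IsBottom r x := by
  let _ : Preorder α :=
    { le := fun x y ↦ ReflTransGen r y x
      le_refl := fun _ ↦ ReflTransGen.refl
      le_trans := fun _ _ _ hxy hyz ↦ hyz.trans hxy }
  obtain ⟨x, hvx, hx⟩ := Set.finite_univ.exists_le_minimal (Set.mem_univ v)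
  exact ⟨x, hvx, fun y hxy ↦ hx.le_of_le (Set.mem_univ y) hxy⟩

/-- `T` can be reached from the given vertex in exactly the given number of steps. -/
def ReachesIn (r : α → α → Prop) (T : Set α) : ℕ → α → Prop
  | 0, v => v ∈ T
  | n + 1, v => ∃ u, r v u ∧ ReachesIn r T n u

/-- The distance from `v` to `T`, with the junk value `0` if `T` is not reachable from `v`. -/
noncomputable def distTo (r : α → α → Prop) (T : Set α) (v : α) : ℕ :=
  sInf {n | ReachesIn r T n v}

lemma exists_reachesIn {T : Set α} {v t : α} (ht : t ∈ T) (hvt : ReflTransGen r v t) :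
    ∃ n, ReachesIn r T n v := by
  induction hvt using ReflTransGen.head_induction_on with
  | refl => exact ⟨0, ht⟩
  | head hvu _ ih =>
    obtain ⟨n, hn⟩ := ih
    exact ⟨n + 1, _, hvu, hn⟩

lemma exists_distTo_lt {T : Set α} {v t : α} (hv : v ∉ T) (ht : t ∈ T)
    (hvt : ReflTransGen r v t) : ∃ u, r v u ∧ distTo r T u < distTo r T v := by
  have hreach : ReachesIn r T (distTo r T v) v := Nat.sInf_mem (exists_reachesIn ht hvt)
  cases hdist : distTo r T v with
  | zero =>
    rw [hdist] at hreach
    exact absurd hreach hv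
  | succ n =>
    rw [hdist] at hreach
    obtain ⟨u, hvu, hu⟩ := hreach
    exact ⟨u, hvu, Nat.lt_succ_of_le (Nat.sInf_le hu)⟩

/-- A vertex of maximal index in a bottom strongly connected component. -/
def IsDominant (r : α → α → Prop) (p : α → ℕ) (x : α) : Prop :=
  IsBottom r x ∧ ∀ y, ReflTransGen r x y → p y ≤ p x

variable {p : α → ℕ}

lemma IsBottom.exists_reach_isDominant [Finite α] (p : α → ℕ) {x : α} (hx : IsBottom r x) :
    ∃ t, ReflTransGen r x t ∧ IsDominant r p t := by
  obtain ⟨t, hxt, hmax⟩ := Set.exists_max_image {y | ReflTransGen r x y} p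
    (Set.toFinite _) ⟨x, ReflTransGen.refl⟩
  exact ⟨t, hxt, hx.of_reach hxt, fun y hty ↦ hmax y (hxt.trans hty)⟩

lemma IsDominant.eq_of_reach {s t : α} (hs : IsDominant r p s) (ht : IsDominant r p t)
    (hst : ReflTransGen r s t) : p t = p s :=
  le_antisymm (hs.2 t hst) (ht.2 s (hs.1 t hst))

lemma reach_of_path {x : ℕ → α} (hx : ∀ n, r (x n) (x (n + 1))) {m n : ℕ} (hmn : m ≤ n) :
    ReflTransGen r (x m) (x n) := by
  induction n, hmn using Nat.le_induction with
  | base => exact ReflTransGen.refl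
  | succ n _ ih => exact ih.tail (hx n)

lemma exists_sSup_recurrent_eq {x : ℕ → α} (hx : ∀ n, r (x n) (x (n + 1))) {T : Set α}
    (hT : ∀ t ∈ T, IsDominant r p t) (hfreq : ∃ᶠ n in Filter.atTop, x n ∈ T) :
    ∃ t ∈ T, sSup {k : ℕ | ∀ N : ℕ, ∃ n ≥ N, p (x n) = k} = p t := by
  rw [Filter.frequently_atTop] at hfreq
  obtain ⟨m, -, hm⟩ := hfreq 0
  refine ⟨x m, hm, IsGreatest.csSup_eq ⟨fun N ↦ ?_, fun k hk ↦ ?_⟩⟩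
  · obtain ⟨n, hn, hnT⟩ := hfreq (max N m)
    exact ⟨n, le_of_max_le_left hn,
      (hT _ hm).eq_of_reach (hT _ hnT) (reach_of_path hx (le_of_max_le_right hn))⟩
  · obtain ⟨n, hn, rfl⟩ := hk m
    exact (hT _ hm).2 _ (reach_of_path hx hn)

end Reachability

/-! ### Richman functions -/

namespace BiddingGame

open Relation

variable {V : Type} [Fintype V] (G : BiddingGame V)

/-- `R(v⁺)`: the largest value of `R` over the successors of `v`. -/
noncomputable def maxSucc (R : V → ℝ) (v : V) : ℝ :=
  (G.adj v).sup' (G.adj_nonempty v) R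

/-- `R(v⁻)`: the smallest value of `R` over the successors of `v`. -/
noncomputable def minSucc (R : V → ℝ) (v : V) : ℝ :=
  (G.adj v).inf' (G.adj_nonempty v) R

/-- The mean of the extremal values of `R` over the successors of `v`. -/
noncomputable def succAvg (R : V → ℝ) (v : V) : ℝ :=
  (G.maxSucc R v + G.minSucc R v) / 2

/-- A Richman function: a fixed point of `succAvg`, the bidding analogue of harmonicity. -/
def IsRichman (R : V → ℝ) : Prop :=
  ∀ v, R v = G.succAvg R v

/-- An edge along which `R` takes its smallest value over the successors. -/
def MinEdge (R : V → ℝ) (v u : V) : Prop :=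
  G.E v u ∧ R u = G.minSucc R v

variable {G} {R R' : V → ℝ} {u v : V}

lemma mem_adj : u ∈ G.adj v ↔ G.E v u := by
  simp only [adj, Finset.mem_filter, Finset.mem_univ, true_and]

lemma le_maxSucc (h : G.E v u) : R u ≤ G.maxSucc R v :=
  Finset.le_sup' R (mem_adj.2 h)

lemma minSucc_le (h : G.E v u) : G.minSucc R v ≤ R u :=
  Finset.inf'_le R (mem_adj.2 h)

lemma exists_minEdge (G : BiddingGame V) (R : V → ℝ) (v : V) : ∃ u, G.MinEdge R v u := by
  obtain ⟨u, hu, hmin⟩ := Finset.exists_mem_eq_inf' (G.adj_nonempty v) R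
  exact ⟨u, mem_adj.1 hu, hmin.symm⟩

lemma succAvg_mono (h : R ≤ R') (v : V) : G.succAvg R v ≤ G.succAvg R' v := by
  have hmax : G.maxSucc R v ≤ G.maxSucc R' v := Finset.sup'_mono_fun fun u _ ↦ h u
  have hmin : G.minSucc R v ≤ G.minSucc R' v := Finset.inf'_mono_fun fun u _ ↦ h u
  unfold succAvg
  linarith

lemma succAvg_eq_of_forall {c : ℝ} (h : ∀ u, G.E v u → R u = c) : G.succAvg R v = c := by
  have hconst : ∀ u ∈ G.adj v, R u = c := fun u hu ↦ h u (mem_adj.1 hu)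
  rw [succAvg, maxSucc, minSucc, Finset.sup'_congr _ rfl hconst, Finset.inf'_congr _ rfl hconst,
    Finset.sup'_const, Finset.inf'_const, add_self_div_two]

lemma succAvg_mem_Icc {a b : ℝ} (h : ∀ u, R u ∈ Set.Icc a b) (v : V) :
    G.succAvg R v ∈ Set.Icc a b := by
  constructor
  · rw [← succAvg_eq_of_forall (G := G) (v := v) (R := fun _ ↦ a) fun _ _ ↦ rfl]
    exact succAvg_mono (fun u ↦ (h u).1) v
  · rw [← succAvg_eq_of_forall (G := G) (v := v) (R := fun _ ↦ b) fun _ _ ↦ rfl]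
    exact succAvg_mono (fun u ↦ (h u).2) v

lemma maxSucc_const_sub (c : ℝ) (R : V → ℝ) (v : V) :
    G.maxSucc (fun u ↦ c - R u) v = c - G.minSucc R v := by
  refine le_antisymm (Finset.sup'_le _ _ fun u hu ↦ ?_) ?_
  · exact sub_le_sub_left (minSucc_le (mem_adj.1 hu)) c
  · obtain ⟨u, hvu, hu⟩ := G.exists_minEdge R v
    rw [← hu]
    exact le_maxSucc (R := fun w ↦ c - R w) hvu

lemma minSucc_const_sub (c : ℝ) (R : V → ℝ) (v : V) :
    G.minSucc (fun u ↦ c - R u) v = c - G.maxSucc R v := by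
  have h := maxSucc_const_sub (G := G) c (fun u ↦ c - R u) v
  simp only [sub_sub_cancel] at h
  rw [h, sub_sub_cancel]

lemma IsRichman.const_sub (hR : G.IsRichman R) (c : ℝ) : G.IsRichman fun v ↦ c - R v := by
  intro v
  have hv := hR v
  rw [succAvg] at hv ⊢
  rw [maxSucc_const_sub, minSucc_const_sub]
  linarith

lemma IsRichman.add_le (hR : G.IsRichman R) {w : V} (hu : G.MinEdge R v u) (hw : G.E v w) :
    R w + R u ≤ 2 * R v := by
  have hv := hR v
  have hmax : R w ≤ G.maxSucc R v := le_maxSucc hw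
  rw [succAvg, ← hu.2] at hv
  linarith

lemma IsRichman.eq_of_le_minSucc (hR : G.IsRichman R) (hv : R v ≤ G.minSucc R v)
    (hvu : G.E v u) : R u = R v ∧ G.MinEdge R v u := by
  have havg := hR v
  have hmin : G.minSucc R v ≤ R u := minSucc_le hvu
  have hmax : R u ≤ G.maxSucc R v := le_maxSucc hvu
  rw [succAvg] at havg
  exact ⟨by linarith, hvu, by linarith⟩

lemma exists_dirichlet (G : BiddingGame V) (A : Set V) (g : V → unitInterval) :
    ∃ R : V → unitInterval, (∀ v ∈ A, R v = g v) ∧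
      ∀ v ∉ A, (R v : ℝ) = G.succAvg (fun u ↦ R u) v := by
  let F : (V → unitInterval) →o (V → unitInterval) :=
    { toFun := fun R v ↦
        if v ∈ A then g v else ⟨G.succAvg (fun u ↦ R u) v, succAvg_mem_Icc (fun u ↦ (R u).2) v⟩
      monotone' := by
        intro R R' hRR' v
        simp only
        split_ifs
        · exact le_rfl
        · exact Subtype.mk_le_mk.2 (succAvg_mono (fun u ↦ hRR' u) v) }
  have hfix : ∀ v, F.lfp v = F F.lfp v := fun v ↦ (congrFun F.map_lfp v).symm
  exact ⟨F.lfp, fun v hv ↦ (hfix v).trans (if_pos hv),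
    fun v hv ↦ congrArg Subtype.val ((hfix v).trans (if_neg hv))⟩

lemma exists_isRichman_eqOn (G : BiddingGame V) {A : Set V} {g : V → unitInterval}
    (hA : ∀ v ∈ A, ∀ u, G.E v u → u ∈ A ∧ g u = g v) :
    ∃ R : V → ℝ, (∀ v, R v ∈ Set.Icc 0 1) ∧ G.IsRichman R ∧ ∀ v ∈ A, R v = g v := by
  obtain ⟨R, hRA, hR⟩ := G.exists_dirichlet A g
  refine ⟨fun v ↦ R v, fun v ↦ (R v).2, fun v ↦ ?_, fun v hv ↦ congrArg Subtype.val (hRA v hv)⟩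
  by_cases hv : v ∈ A
  · refine (succAvg_eq_of_forall fun u hvu ↦ ?_).symm
    obtain ⟨hu, hgu⟩ := hA v hv u hvu
    simp only [hRA u hu, hRA v hv, hgu]
  · exact hR v hv

/-- At a vertex where `R` is minimal among those reachable along minimizing edges, all edges are
minimizing and `R` is constant on everything reachable from there, including a bottom component. -/
lemma IsRichman.exists_reach_minEdge (hR : G.IsRichman R) {T : Set V} {c : ℝ}
    (hT : ∀ x, IsBottom G.E x → R x < c → ∃ t ∈ T, ReflTransGen G.E x t) (hv : R v < c) :
    ∃ t ∈ T, ReflTransGen (G.MinEdge R) v t := by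
  obtain ⟨w, hvw, hmin⟩ := Set.exists_min_image {x | ReflTransGen (G.MinEdge R) v x} R
    (Set.toFinite _) ⟨v, ReflTransGen.refl⟩
  have hreach : ∀ x, ReflTransGen G.E w x → ReflTransGen (G.MinEdge R) v x ∧ R x = R w := by
    intro x hwx
    induction hwx with
    | refl => exact ⟨hvw, rfl⟩
    | @tail x y _ hxy ih =>
      obtain ⟨hvx, hx⟩ := ih
      obtain ⟨a, ha⟩ := G.exists_minEdge R x
      have hle : R x ≤ G.minSucc R x := by
        rw [hx, ← ha.2]
        exact hmin a (hvx.tail ha)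
      obtain ⟨hy, hmin_xy⟩ := hR.eq_of_le_minSucc hle hxy
      exact ⟨hvx.tail hmin_xy, hy.trans hx⟩
  obtain ⟨x, hwx, hx⟩ := exists_reach_isBottom G.E w
  have hxc : R x < c := (hreach x hwx).2.trans_lt ((hmin v ReflTransGen.refl).trans_lt hv)
  obtain ⟨t, ht, hxt⟩ := hT x hx hxc
  exact ⟨t, ht, (hreach t (hwx.trans hxt)).1⟩

/-! ### Steering the token by betting a fraction of the surplus -/

/-- The data by which a player steers the token towards `T`: a nonnegative function `R` bounding
the budget he needs, the successor `next v` he moves to, and a rank that drops along `next`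
outside `T` wherever `R` does not require the whole budget. -/
structure Steering (G : BiddingGame V) (T : Set V) (R : V → ℝ) where
  next : V → V
  rank : V → ℕ
  edge_next : ∀ v, G.E v (next v)
  nonneg : ∀ v, 0 ≤ R v
  add_le : ∀ v u, G.E v u → R u + R (next v) ≤ 2 * R v
  rank_next_lt : ∀ v ∉ T, R v < 1 → rank (next v) < rank v

lemma IsRichman.nonempty_steering (hR : G.IsRichman R) (hnonneg : ∀ v, 0 ≤ R v) {T : Set V}
    (hT : ∀ x, IsBottom G.E x → R x < 1 → ∃ t ∈ T, ReflTransGen G.E x t) :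
    Nonempty (G.Steering T R) := by
  let rank := distTo (G.MinEdge R) T
  have hnext : ∀ v, ∃ u, G.MinEdge R v u ∧ (v ∉ T → R v < 1 → rank u < rank v) := by
    intro v
    by_cases hv : v ∉ T ∧ R v < 1
    · obtain ⟨t, ht, hvt⟩ := hR.exists_reach_minEdge hT hv.2
      obtain ⟨u, hvu, hu⟩ := exists_distTo_lt hv.1 ht hvt
      exact ⟨u, hvu, fun _ _ ↦ hu⟩
    · obtain ⟨u, hvu⟩ := G.exists_minEdge R v
      exact ⟨u, hvu, fun hvT hv1 ↦ absurd ⟨hvT, hv1⟩ hv⟩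
  choose next hmin hrank using hnext
  exact ⟨⟨next, rank, fun v ↦ (hmin v).1, hnonneg, fun v _ hvu ↦ hR.add_le (hmin v) hvu, hrank⟩⟩

namespace Steering

variable {T : Set V} (S : G.Steering T R)

/-- A positive quantity that is multiplied by at least `4` when the rank drops; the exponent is
shifted by `2` so that it stays small. -/
noncomputable def gain (v : V) : ℝ := (1 / 4) ^ (S.rank v + 2)

/-- The fraction of the surplus that is put at stake at `v`. -/
noncomputable def stake (v : V) : ℝ := if v ∈ T then 0 else 2 * S.gain v

/-- The bid at `v` with budget `β`; it is `0` when there is no surplus, which never happens in the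
plays of interest. -/
noncomputable def bid (v : V) (β : ℝ) : ℝ :=
  if R v < β then R v - R (S.next v) + S.stake v * (β - R v) else 0

/-- One round, with budget `β` at `v` and `β'` at `u`, in which the player either wins with his
prescribed bid and moves to `next v`, or is paid at least that bid. -/
def Step (v : V) (β : ℝ) (u : V) (β' : ℝ) : Prop :=
  G.E v u ∧ ((u = S.next v ∧ β' = β - S.bid v β) ∨ β + S.bid v β ≤ β')

lemma gain_pos (v : V) : 0 < S.gain v := by
  unfold gain
  positivity

lemma gain_le (v : V) : S.gain v ≤ 1 / 16 := by
  calc S.gain v ≤ (1 / 4) ^ 2 :=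
        pow_le_pow_of_le_one (by norm_num) (by norm_num) (Nat.le_add_left 2 _)
    _ = 1 / 16 := by norm_num

lemma four_mul_gain_le (hvT : v ∉ T) (hv : R v < 1) : 4 * S.gain v ≤ S.gain (S.next v) := by
  have hrank : S.rank (S.next v) + 2 + 1 ≤ S.rank v + 2 := by
    have := S.rank_next_lt v hvT hv
    omega
  calc 4 * S.gain v ≤ 4 * (1 / 4) ^ (S.rank (S.next v) + 2 + 1) := by
        unfold gain
        gcongr ?_ * ?_
        exact pow_le_pow_of_le_one (by norm_num) (by norm_num) hrank
    _ = S.gain (S.next v) := by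
        rw [gain, pow_succ]
        ring

lemma stake_nonneg (v : V) : 0 ≤ S.stake v := by
  have := S.gain_pos v
  unfold stake
  split_ifs <;> linarith

lemma stake_lt_one (v : V) : S.stake v < 1 := by
  have := S.gain_le v
  unfold stake
  split_ifs <;> linarith

lemma bid_nonneg (v : V) (β : ℝ) : 0 ≤ S.bid v β := by
  have hnext := S.add_le v _ (S.edge_next v)
  unfold bid
  split_ifs with hβ
  · have := mul_nonneg (S.stake_nonneg v) (sub_nonneg.2 hβ.le)
    linarith
  · exact le_rfl

lemma bid_le (v : V) {β : ℝ} (hβ : 0 ≤ β) : S.bid v β ≤ β := by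
  have hnext := S.nonneg (S.next v)
  unfold bid
  split_ifs with hβv
  · have := mul_le_of_le_one_left (sub_nonneg.2 hβv.le) (S.stake_lt_one v).le
    linarith
  · exact hβ

variable {S} {β β' : ℝ}

lemma Step.surplus_cases (h : S.Step v β u β') (hβ : R v < β) :
    (u = S.next v ∧ β' - R u = (1 - S.stake v) * (β - R v)) ∨
      (1 + S.stake v) * (β - R v) ≤ β' - R u := by
  obtain ⟨hvu, hstep⟩ := h
  rw [bid, if_pos hβ] at hstep
  rcases hstep with ⟨rfl, rfl⟩ | hβ'
  · exact Or.inl ⟨rfl, by ring⟩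
  · have := S.add_le v u hvu
    exact Or.inr (by linarith)

lemma Step.lt (h : S.Step v β u β') (hβ : R v < β) : R u < β' := by
  have hσ := sub_pos.2 hβ
  rw [← sub_pos]
  rcases h.surplus_cases hβ with ⟨-, hσ'⟩ | hσ'
  · rw [hσ']
    exact mul_pos (sub_pos.2 (S.stake_lt_one v)) hσ
  · exact (mul_pos (by linarith [S.stake_nonneg v]) hσ).trans_le hσ'

/-- With `y = gain v ≤ 1 / 16`, the surplus factor is at least `1 + 2 y` upon losing and equals
`1 - 2 y` upon winning, when the new weight is at least `1 + 4 y`; both `1 + 2 y` and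
`(1 - 2 y) (1 + 4 y)` exceed the old weight `1 + y` by a factor of at least `1 + y / 4`. -/
lemma Step.weighted_surplus_growth (h : S.Step v β u β') (hβ : R v < β) (hβ1 : β ≤ 1)
    (hvT : v ∉ T) :
    (1 + S.gain v / 4) * ((1 + S.gain v) * (β - R v)) ≤ (1 + S.gain u) * (β' - R u) := by
  have hpos := S.gain_pos v
  have hle := S.gain_le v
  have hstake : S.stake v = 2 * S.gain v := if_neg hvT
  rw [← mul_assoc]
  rcases h.surplus_cases hβ with ⟨rfl, hσ'⟩ | hσ'
  · have hgain := S.four_mul_gain_le hvT (hβ.trans_le hβ1)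
    rw [hσ', hstake, ← mul_assoc]
    have := sub_pos.2 hβ
    gcongr ?_ * _
    nlinarith
  · rw [hstake] at hσ'
    calc (1 + S.gain v / 4) * (1 + S.gain v) * (β - R v)
        ≤ (1 + 2 * S.gain v) * (β - R v) := by
          have := sub_pos.2 hβ
          gcongr ?_ * _
          nlinarith
      _ ≤ β' - R u := hσ'
      _ ≤ (1 + S.gain u) * (β' - R u) := by
          have hσ'_nonneg := sub_nonneg.2 (h.lt hβ).le
          nlinarith [mul_nonneg (S.gain_pos u).le hσ'_nonneg]

lemma frequently_mem_of_step {x : ℕ → V} {β : ℕ → ℝ} (hβ0 : R (x 0) < β 0) (hβ1 : ∀ n, β n ≤ 1)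
    (hstep : ∀ n, S.Step (x n) (β n) (x (n + 1)) (β (n + 1))) :
    ∃ᶠ n in Filter.atTop, x n ∈ T := by
  have hβ : ∀ n, R (x n) < β n := fun n ↦ by
    induction n with
    | zero => exact hβ0
    | succ n ih => exact (hstep n).lt ih
  intro hnot
  obtain ⟨N, hN⟩ := Filter.eventually_atTop.1 hnot
  have : Nonempty V := ⟨x 0⟩
  obtain ⟨w, hw⟩ := Finite.exists_min S.gain
  let φ : ℕ → ℝ := fun k ↦ (1 + S.gain (x (N + k))) * (β (N + k) - R (x (N + k)))
  have hφ_pos : ∀ k, 0 < φ k := fun k ↦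
    mul_pos (by linarith [S.gain_pos (x (N + k))]) (sub_pos.2 (hβ (N + k)))
  have hφ_growth : ∀ k, (1 + S.gain w / 4) * φ k ≤ φ (k + 1) := fun k ↦ by
    calc (1 + S.gain w / 4) * φ k ≤ (1 + S.gain (x (N + k)) / 4) * φ k := by
          have := hφ_pos k
          gcongr
          exact hw _
      _ ≤ φ (k + 1) :=
          (hstep _).weighted_surplus_growth (hβ _) (hβ1 _) (hN _ (Nat.le_add_right N k))
  have hφ_le : ∀ k, φ k ≤ 2 := fun k ↦ by
    have hgain := S.gain_le (x (N + k))
    have hR := S.nonneg (x (N + k))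
    have hβk := hβ1 (N + k)
    calc φ k ≤ 2 * 1 := mul_le_mul (by linarith) (by linarith) (sub_pos.2 (hβ _)).le zero_le_two
      _ = 2 := mul_one 2
  have hφ_tendsto : Filter.Tendsto φ Filter.atTop Filter.atTop :=
    tendsto_atTop_of_geom_le (hφ_pos 0) (by linarith [S.gain_pos w]) hφ_growth
  obtain ⟨k, hk⟩ := (hφ_tendsto.eventually_gt_atTop 2).exists
  exact hk.not_ge (hφ_le k)

end Steering

end BiddingGame

/-! ### Plays and the exchange of the players -/

section Plays

variable {V : Type}

lemma play_succ_cases (tb : TieBreak V) (f1 f2 : Strat V) (v0 : V) (n : ℕ) :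
    let h := play tb f1 f2 v0 n
    let h' := play tb f1 f2 v0 (n + 1)
    (h'.cur = (f1 h).2 ∧ h'.pay1 = h.pay1 + (f1 h).1) ∨
      ((f1 h).1 ≤ (f2 h).1 ∧ h'.cur = (f2 h).2 ∧ h'.pay1 = h.pay1 - (f2 h).1) := by
  intro h h'
  have h'_eq : h' = extend tb f1 f2 h := rfl
  by_cases hwin : (f2 h).1 < (f1 h).1 ∨ ((f1 h).1 = (f2 h).1 ∧ tb h = true)
  · rw [extend, if_pos hwin] at h'_eq
    left
    simp [h'_eq, Hist.cur, Hist.pay1]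
  · rw [extend, if_neg hwin] at h'_eq
    right
    simp [h'_eq, Hist.cur, Hist.pay1, sub_eq_add_neg, not_lt.1 (not_or.1 hwin).1]

/-- The same history with the names of the players exchanged. -/
def Hist.swap (h : Hist V) : Hist V :=
  ⟨h.init, h.rounds.map fun r ↦ ⟨r.dest, r.bid, !r.p1Won⟩⟩

/-- The strategy of the other player that corresponds to `f` when the players are exchanged. -/
def Strat.swap (f : Strat V) : Strat V := fun h ↦ f h.swap

/-- The tie-breaking mechanism that favours the same player as `tb` after the exchange. -/
def TieBreak.swap (tb : TieBreak V) : TieBreak V := fun h ↦ !tb h.swap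

lemma Hist.swap_swap (h : Hist V) : h.swap.swap = h := by
  simp [Hist.swap, Function.comp_def]

lemma Strat.swap_swap (f : Strat V) : f.swap.swap = f :=
  funext fun h ↦ congrArg f h.swap_swap

lemma Hist.cur_swap (h : Hist V) : h.swap.cur = h.cur := by
  simp only [Hist.cur, Hist.swap, List.getLast?_map]
  cases h.rounds.getLast? <;> rfl

lemma Hist.pay2_swap (h : Hist V) : h.swap.pay2 = h.pay1 := by
  simp only [Hist.pay2, Hist.pay1, Hist.swap, List.map_map, List.sum_neg]
  congr 2
  funext r
  cases hr : r.p1Won <;> simp [hr]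

lemma extend_swap (tb : TieBreak V) (f1 f2 : Strat V) (h : Hist V) :
    extend tb.swap f2.swap f1.swap h.swap = (extend tb f1 f2 h).swap := by
  simp only [extend, Strat.swap, TieBreak.swap, Hist.swap_swap]
  rcases lt_trichotomy (f1 h).1 (f2 h).1 with hlt | heq | hgt
  · simp [hlt, hlt.not_gt, hlt.ne, Hist.swap]
  · cases htb : tb h <;> simp [heq, Hist.swap]
  · simp [hgt, hgt.not_gt, hgt.ne, Hist.swap]

lemma play_swap (tb : TieBreak V) (f1 f2 : Strat V) (v0 : V) (n : ℕ) :
    play tb.swap f2.swap f1.swap v0 n = (play tb f1 f2 v0 n).swap := by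
  induction n with
  | zero => rfl
  | succ n ih => rw [play, play, ih, extend_swap]

lemma visit_swap (tb : TieBreak V) (f1 f2 : Strat V) (v0 : V) (n : ℕ) :
    visit tb.swap f2.swap f1.swap v0 n = visit tb f1 f2 v0 n := by
  rw [visit, play_swap, Hist.cur_swap, visit]

variable [Fintype V] {G : BiddingGame V}

lemma Legal1.swap {f : Strat V} {B : ℝ} (hf : Legal1 G f B) : Legal2 G f.swap B := by
  intro tb f1 v0 n
  have hlegal := hf tb.swap f1.swap v0 n
  have hplay := play_swap tb f1 f.swap v0 n
  rw [Strat.swap_swap] at hplay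
  rwa [hplay, Hist.cur_swap, ← Hist.pay2_swap, Hist.swap_swap] at hlegal

lemma visit_edge {tb : TieBreak V} {f1 f2 : Strat V} {B1 B2 : ℝ} (hf1 : Legal1 G f1 B1)
    (hf2 : Legal2 G f2 B2) (v0 : V) (n : ℕ) :
    G.E (visit tb f1 f2 v0 n) (visit tb f1 f2 v0 (n + 1)) := by
  rcases play_succ_cases tb f1 f2 v0 n with ⟨hcur, -⟩ | ⟨-, hcur, -⟩
  · rw [visit, visit, hcur]
    exact (hf1 tb f2 v0 n).2.2
  · rw [visit, visit, hcur]
    exact (hf2 tb f1 v0 n).2.2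

lemma legal1_of_forall {f : Strat V} {B : ℝ} (hB : 0 ≤ B) (hnonneg : ∀ h, 0 ≤ (f h).1)
    (hle : ∀ h, 0 ≤ B - h.pay1 → (f h).1 ≤ B - h.pay1) (hedge : ∀ h, G.E h.cur (f h).2) :
    Legal1 G f B := by
  intro tb f2 v0 n
  have hbudget : 0 ≤ B - (play tb f f2 v0 n).pay1 := by
    induction n with
    | zero => simpa [play, Hist.pay1] using hB
    | succ n ih =>
      have hbid_nonneg := hnonneg (play tb f f2 v0 n)
      have hbid_le := hle _ ih
      rcases play_succ_cases tb f f2 v0 n with ⟨-, hpay⟩ | ⟨hbid, -, hpay⟩ <;> linarith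
  exact ⟨hnonneg _, hle _ hbudget, hedge _⟩

end Plays

/-! ### Thresholds of parity games -/

namespace BiddingGame

open Relation

variable {V : Type} [Fintype V] {G : BiddingGame V} {T : Set V} {R : V → ℝ} {v : V} {B : ℝ}

/-- The strategy of Player 1 with initial budget `B` that follows `S`. -/
noncomputable def Steering.strat (S : G.Steering T R) (B : ℝ) : Strat V :=
  fun h ↦ (S.bid h.cur (B - h.pay1), S.next h.cur)

lemma Steering.legal1_strat (S : G.Steering T R) (hB : 0 ≤ B) : Legal1 G (S.strat B) B :=
  legal1_of_forall hB (fun _ ↦ S.bid_nonneg _ _) (fun _ hh ↦ S.bid_le _ hh)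
    fun _ ↦ S.edge_next _

lemma Steering.frequently_visit_strat (S : G.Steering T R) (hB : R v < B) (tb : TieBreak V)
    {f2 : Strat V} (hf2 : Legal2 G f2 (1 - B)) :
    ∃ᶠ n in Filter.atTop, visit tb (S.strat B) f2 v n ∈ T := by
  have hf1 := S.legal1_strat ((S.nonneg v).trans hB.le)
  let β : ℕ → ℝ := fun n ↦ B - (play tb (S.strat B) f2 v n).pay1
  have hβ0 : R v < β 0 := by simpa [β, play, Hist.pay1] using hB
  have hβ1 : ∀ n, β n ≤ 1 := fun n ↦ by
    obtain ⟨hbid_nonneg, hbid_le, -⟩ := hf2 tb (S.strat B) v n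
    simp only [Hist.pay2] at hbid_le
    linarith
  refine S.frequently_mem_of_step hβ0 hβ1 fun n ↦ ⟨visit_edge hf1 hf2 v n, ?_⟩
  rcases play_succ_cases tb (S.strat B) f2 v n with ⟨hcur, hpay⟩ | ⟨hbid, -, hpay⟩
  · have hβ_succ : β (n + 1) = β n - S.bid (visit tb (S.strat B) f2 v n) (β n) := by
      simp only [β, hpay, sub_add_eq_sub_sub]
      rfl
    exact Or.inl ⟨hcur, hβ_succ⟩
  · have hβ_succ : β (n + 1) = β n + (f2 (play tb (S.strat B) f2 v n)).1 := by
      simp only [β, hpay]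
      ring
    exact Or.inr (hβ_succ ▸ add_le_add_right hbid (β n))

lemma IsRichman.exists_legal1_frequently_visit (hR : G.IsRichman R) (hnonneg : ∀ v, 0 ≤ R v)
    (hT : ∀ x, IsBottom G.E x → R x < 1 → ∃ t ∈ T, ReflTransGen G.E x t) (hB : R v < B) :
    ∃ f1 : Strat V, Legal1 G f1 B ∧ ∀ (tb : TieBreak V) (f2 : Strat V), Legal2 G f2 (1 - B) →
      ∃ᶠ n in Filter.atTop, visit tb f1 f2 v n ∈ T := by
  obtain ⟨S⟩ := hR.nonempty_steering hnonneg hT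
  exact ⟨S.strat B, S.legal1_strat ((hnonneg v).trans hB.le),
    fun tb _ hf2 ↦ S.frequently_visit_strat hB tb hf2⟩

lemma IsRichman.exists_legal2_frequently_visit (hR : G.IsRichman R) (hnonneg : ∀ v, 0 ≤ R v)
    (hT : ∀ x, IsBottom G.E x → R x < 1 → ∃ t ∈ T, ReflTransGen G.E x t) (hB : R v < B) :
    ∃ f2 : Strat V, Legal2 G f2 B ∧ ∀ (tb : TieBreak V) (f1 : Strat V), Legal1 G f1 (1 - B) →
      ∃ᶠ n in Filter.atTop, visit tb f1 f2 v n ∈ T := by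
  obtain ⟨f, hf, hvisit⟩ := hR.exists_legal1_frequently_visit hnonneg hT hB
  refine ⟨f.swap, hf.swap, fun tb f1 hf1 ↦ ?_⟩
  have h := hvisit tb.swap f1.swap hf1.swap
  rw [← f.swap_swap] at h
  simpa only [visit_swap] using h

variable {p : V → ℕ}

lemma IsRichman.win1ParityFrom (hR : G.IsRichman R) (hnonneg : ∀ v, 0 ≤ R v)
    (hodd : ∀ x, IsBottom G.E x → R x < 1 →
      ∃ t ∈ {t | IsDominant G.E p t ∧ Odd (p t)}, ReflTransGen G.E x t) (hB : R v < B) :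
    Win1ParityFrom G p v B := by
  intro tb
  obtain ⟨f1, hf1, hvisit⟩ := hR.exists_legal1_frequently_visit hnonneg hodd hB
  refine ⟨f1, hf1, fun f2 hf2 ↦ ?_⟩
  obtain ⟨t, ht, hsup⟩ := exists_sSup_recurrent_eq (visit_edge hf1 hf2 v) (fun _ ht ↦ ht.1)
    (hvisit tb f2 hf2)
  rw [Win1Parity, hsup]
  exact ht.2

lemma IsRichman.win2ParityFrom (hR : G.IsRichman R) (hnonneg : ∀ v, 0 ≤ R v)
    (heven : ∀ x, IsBottom G.E x → R x < 1 →
      ∃ t ∈ {t | IsDominant G.E p t ∧ ¬Odd (p t)}, ReflTransGen G.E x t) (hB : R v < B) :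
    Win2ParityFrom G p v B := by
  intro tb
  obtain ⟨f2, hf2, hvisit⟩ := hR.exists_legal2_frequently_visit hnonneg heven hB
  refine ⟨f2, hf2, fun f1 hf1 ↦ ?_⟩
  obtain ⟨t, ht, hsup⟩ := exists_sSup_recurrent_eq (visit_edge hf1 hf2 v) (fun _ ht ↦ ht.1)
    (hvisit tb f1 hf1)
  rw [Win1Parity, hsup]
  exact ht.2

lemma exists_isRichman_forall_isBottom (G : BiddingGame V) (p : V → ℕ) :
    ∃ R : V → ℝ, (∀ v, R v ∈ Set.Icc 0 1) ∧ G.IsRichman R ∧ ∀ x, IsBottom G.E x →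
      ∃ t, ReflTransGen G.E x t ∧ IsDominant G.E p t ∧ R x = if Odd (p t) then 0 else 1 := by
  let oddDominant : Set V := {t | IsDominant G.E p t ∧ Odd (p t)}
  let g : V → unitInterval := fun x ↦ if ∃ t ∈ oddDominant, ReflTransGen G.E x t then 0 else 1
  have hg : ∀ x ∈ {x | IsBottom G.E x}, ∀ u, G.E x u → u ∈ {x | IsBottom G.E x} ∧ g u = g x := by
    intro x hx u hxu
    have hreach : ∀ t, ReflTransGen G.E u t ↔ ReflTransGen G.E x t := fun t ↦
      ⟨fun h ↦ h.head hxu, fun h ↦ (hx u (.single hxu)).trans h⟩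
    exact ⟨hx.of_reach (.single hxu), by simp only [g, hreach]⟩
  obtain ⟨R, hR01, hR, hRg⟩ := G.exists_isRichman_eqOn hg
  refine ⟨R, hR01, hR, fun x hx ↦ ?_⟩
  rw [hRg x hx]
  by_cases hodd : ∃ t ∈ oddDominant, ReflTransGen G.E x t
  · have ⟨t, ht, hxt⟩ := hodd
    exact ⟨t, hxt, ht.1, by simp [g, hodd, ht.2]⟩
  · obtain ⟨t, hxt, ht⟩ := hx.exists_reach_isDominant p
    have hpt : ¬Odd (p t) := fun h ↦ hodd ⟨t, ⟨ht, h⟩, hxt⟩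
    exact ⟨t, hxt, ht, by simp [g, hodd, hpt]⟩

lemma exists_isThreshParity (G : BiddingGame V) (p : V → ℕ) :
    ∃ R : V → ℝ, ∀ v, R v ∈ Set.Icc (0 : ℝ) 1 ∧ IsThreshParity G p v (R v) := by
  obtain ⟨R, hR01, hR, hbottom⟩ := G.exists_isRichman_forall_isBottom p
  refine ⟨R, fun v ↦ ⟨hR01 v, fun B _ hB ↦ ?_, fun B _ hB ↦ ?_⟩⟩
  · refine hR.win1ParityFrom (fun v ↦ (hR01 v).1) (fun x hx hlt ↦ ?_) hB
    obtain ⟨t, hxt, ht, hRx⟩ := hbottom x hx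
    exact ⟨t, ⟨ht, by_contra fun h ↦ hlt.ne (hRx.trans (if_neg h))⟩, hxt⟩
  · refine (hR.const_sub 1).win2ParityFrom (fun v ↦ sub_nonneg.2 (hR01 v).2) (fun x hx hlt ↦ ?_) hB
    obtain ⟨t, hxt, ht, hRx⟩ := hbottom x hx
    have hpos : 0 < R x := by linarith
    exact ⟨t, ⟨ht, fun h ↦ hpos.ne' (hRx.trans (if_pos h))⟩, hxt⟩

end BiddingGame

lemma IsThreshParity.le {V : Type} [Fintype V] {G : BiddingGame V} {p : V → ℕ} {v : V}
    {t t' : ℝ} (ht : IsThreshParity G p v t) (ht0 : 0 ≤ t) (ht' : IsThreshParity G p v t')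
    (ht'1 : t' ≤ 1) : t' ≤ t := by
  by_contra! hlt
  obtain ⟨B, htB, hBt'⟩ := exists_between hlt
  let tb : TieBreak V := fun _ ↦ true
  obtain ⟨f1, hf1, hwin1⟩ := ht.1 B (by linarith) htB tb
  obtain ⟨f2, hf2, hwin2⟩ := ht'.2 (1 - B) (by linarith) (by linarith) tb
  exact hwin2 f1 (by rwa [sub_sub_cancel]) (hwin1 f2 hf2)

/-- In every parity bidding game, threshold budgets exist and are
unique: there is exactly one function `Thresh : V → [0,1]` such that Player 1 wins from
`v` whenever his budget exceeds `Thresh v` and Player 2 wins from `v` whenever his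
budget exceeds `1 - Thresh v`. -/
theorem parity_threshold_exists_unique
    {V : Type} [Fintype V] (G : BiddingGame V) (p : V → ℕ) :
    ∃! Thresh : V → ℝ,
      ∀ v : V, Thresh v ∈ Set.Icc (0 : ℝ) 1 ∧ IsThreshParity G p v (Thresh v) := by
  obtain ⟨R, hR⟩ := G.exists_isThreshParity p
  refine ⟨R, hR, fun R' hR' ↦ funext fun v ↦ ?_⟩
  obtain ⟨⟨hR0, hR1⟩, hthresh⟩ := hR v
  obtain ⟨⟨hR'0, hR'1⟩, hthresh'⟩ := hR' v
  exact le_antisymm (hthresh.le hR0 hthresh' hR'1) (hthresh'.le hR'0 hthresh hR1)
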